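/- arXiv:1911.01029 — 2 statements merged into one kernel-verified Lean document; each statement's English description precedes it below -/
import Mathlib

section
/- (Alladi's duality theorem.) Let f be a bounded real-valued arithmetic function and δ a real constant. Then ∑_{2 ≤ n ≤ x} f(P(n)) = δ·x + o(x) as x → ∞ if and only if the partial sums ∑_{2 ≤ n ≤ x} μ(n)·f(p(n))/n converge to −δ as x → ∞. -/
/-!
Put `g n = μ(n) f(p(n))` for `n ≥ 2` and `g 1 = 0`. Multiplying or dividing a squarefree divisor
`d ∉ {1, P(n)}` of `n` by `P(n)` flips the sign of `μ(d)` and keeps `p(d)`, so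
`∑_{d ∣ n} g d = -f(P(n))` for `n ≥ 2` (`sum_divisors_dualCoeff`). Summing over `n ≤ N`,
`∑_{2 ≤ n ≤ N} f(P(n)) = -∑_{d ≤ N} g(d) ⌊N/d⌋ = -N ∑_{d ≤ N} g(d)/d + ∑_{d ≤ N} g(d) {N/d}`,
and the equivalence follows in both directions once the last sum is `o(N)`.

By Axer's theorem (`axer`) this holds as soon as `∑_{n ≤ N} g(n) = o(N)`, which is true for every
bounded `f` (`sublinear_sum_dualCoeff`): the integers without prime factors below `k` have upper
density at most `∏_{p < k} (1 - 1/p)`, which tends to `0`, while the terms with `p(n)` equal to a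
fixed prime `k` contribute `f(k)` times a difference of two sums of `μ` over rough numbers, and
these are `o(N)` by an induction starting from `∑_{n ≤ N} μ(n) = o(N)`.

The last estimate, equivalent to the prime number theorem, is `tendsto_mertens_div`. The function
`h(u) = e^{-u} ∑_{n ≤ e^u} μ(n)` is bounded, and its Laplace transform `1 / ((z + 1) ζ(z + 1))`
extends continuously to `Re z ≥ 0` because `ζ` has no zeros on `Re s ≥ 1` and a pole at `1`.
Pairing `h` with the translates of the Fourier transform of a bump function and applying the
Riemann–Lebesgue lemma shows that smoothed averages of `h` near `T` tend to `0` as `T → ∞`; since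
`h` oscillates slowly, `h` itself tends to `0` (`tauberian`).
-/

open Finset Filter Asymptotics

/-- `maxPrimeFac n` is the largest prime divisor of `n` (junk value `0` for `n ≤ 1`). -/
def maxPrimeFac (n : ℕ) : ℕ := n.primeFactors.sup id

open MeasureTheory Topology
open scoped FourierTransform Real

/-! ### A Tauberian theorem for Laplace transforms -/

/-- Parseval-type formula on the boundary line `Re z = 0`, obtained from the self-adjointness of the
Fourier transform applied to `h u * exp (-σ u)` by letting `σ → 0⁺`. -/
theorem smoothed_eq (h : ℝ → ℂ) (hm : Measurable h) (hb : ∀ u, ‖h u‖ ≤ 1)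
    (h0 : ∀ u < 0, h u = 0) (H : ℂ → ℂ) (hH : ContinuousOn H {z | 0 ≤ z.re})
    (hL : ∀ z : ℂ, 0 < z.re → ∫ u : ℝ, h u * Complex.exp (-z * u) = H z)
    (φ : ℝ → ℂ) (hφ : Continuous φ) (hφs : HasCompactSupport φ) (hk : Integrable (𝓕 φ)) (T : ℝ) :
    ∫ u : ℝ, h u * 𝓕 φ (u - T) =
      ∫ v : ℝ, Real.fourierChar (-(v * -T)) • (φ v * H (2 * π * v * Complex.I)) := by
  have hφi : Integrable φ := hφ.integrable_of_hasCompactSupport hφs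
  set f : ℝ → ℂ := fun v => Real.fourierChar (v * T) • φ v with hf
  have hfc : Continuous f := by
    rw [hf]
    exact (Real.continuous_fourierChar.comp (by fun_prop)).smul hφ
  have hfi : Integrable f := by
    refine hφi.norm.mono' hfc.aestronglyMeasurable (ae_of_all _ fun v => ?_)
    simp [hf]
  have hFf : ∀ u, 𝓕 f u = 𝓕 φ (u - T) := by
    intro u
    rw [Real.fourier_real_eq, Real.fourier_real_eq]
    refine integral_congr_ae (ae_of_all _ fun v => ?_)
    simp only [hf]
    rw [smul_smul, ← AddChar.map_add_eq_mul]
    congr 2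
    ring
  -- At height `σ > 0` the transform of `h u * exp (-σ u)` at `v` is `H (σ + 2πiv)`.
  have key : ∀ σ : ℝ, 0 < σ → ∫ u : ℝ, (h u * 𝓕 φ (u - T)) * Real.exp (-σ * u) =
      ∫ v : ℝ, f v * H (σ + 2 * π * v * Complex.I) := by
    intro σ hσ
    set g : ℝ → ℂ := fun u => h u * Real.exp (-σ * u) with hg
    have hgi : Integrable g := by
      have h1 : IntegrableOn (fun u : ℝ => Real.exp (-σ * u)) (Set.Ici 0) :=
        (integrableOn_Ici_iff_integrableOn_Ioi).2 (exp_neg_integrableOn_Ioi 0 hσ)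
      have h2 := (integrable_indicator_iff measurableSet_Ici).2 h1
      refine h2.mono' (by fun_prop) (ae_of_all _ fun u => ?_)
      by_cases hu : u < 0
      · simp [hg, h0 u hu, not_le.2 hu]
      · rw [Set.indicator_of_mem (by simpa using hu), hg, norm_mul, Complex.norm_real,
          Real.norm_of_nonneg (Real.exp_nonneg _)]
        exact mul_le_of_le_one_left (Real.exp_nonneg _) (hb u)
    have e := VectorFourier.integral_fourierIntegral_smul_eq_flip (μ := volume) (ν := volume)
      (L := innerₗ ℝ) (e := Real.fourierChar) Real.continuous_fourierChar
      continuous_inner hfi hgi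
    have e1 : ∀ u, VectorFourier.fourierIntegral Real.fourierChar volume (innerₗ ℝ) f u
        = 𝓕 φ (u - T) := fun u => hFf u
    have e2 : ∀ v : ℝ, VectorFourier.fourierIntegral Real.fourierChar volume (innerₗ ℝ).flip g v
        = H (σ + 2 * π * v * Complex.I) := by
      intro v
      rw [← hL _ (by simpa using hσ), flip_innerₗ]
      change 𝓕 g v = _
      rw [Real.fourier_real_eq_integral_exp_smul]
      refine integral_congr_ae (ae_of_all _ fun u => ?_)
      simp only [hg, smul_eq_mul]
      rw [Complex.ofReal_exp, mul_left_comm, ← Complex.exp_add]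
      congr 2
      push_cast
      ring
    simp only [e1, e2, smul_eq_mul] at e
    rw [← e]
    refine integral_congr_ae (ae_of_all _ fun u => ?_)
    simp only [hg]
    ring
  have hkT : Integrable (fun u => 𝓕 φ (u - T)) := hk.comp_sub_right T
  have lim1 : Tendsto (fun σ : ℝ => ∫ u : ℝ, (h u * 𝓕 φ (u - T)) * Real.exp (-σ * u))
      (𝓝[>] 0) (𝓝 (∫ u : ℝ, h u * 𝓕 φ (u - T))) := by
    refine tendsto_integral_filter_of_dominated_convergence (fun u => ‖𝓕 φ (u - T)‖) ?_ ?_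
      hkT.norm ?_
    · refine Eventually.of_forall fun σ => ?_
      exact (hm.aestronglyMeasurable.mul hkT.aestronglyMeasurable).mul (by fun_prop)
    · filter_upwards [self_mem_nhdsWithin] with σ hσ
      refine ae_of_all _ fun u => ?_
      by_cases hu : u < 0
      · simp [h0 u hu]
      · rw [norm_mul, norm_mul, Complex.norm_real, Real.norm_of_nonneg (Real.exp_nonneg _)]
        have h3 : Real.exp (-σ * u) ≤ 1 := by
          rw [Real.exp_le_one_iff]
          have : 0 ≤ σ * u := mul_nonneg (le_of_lt hσ) (not_lt.1 hu)
          linarith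
        calc ‖h u‖ * ‖𝓕 φ (u - T)‖ * Real.exp (-σ * u) ≤ 1 * ‖𝓕 φ (u - T)‖ * 1 := by
              gcongr
              exact hb u
          _ = _ := by ring
    · refine ae_of_all _ fun u => ?_
      have : Tendsto (fun σ : ℝ => (h u * 𝓕 φ (u - T)) * (Real.exp (-σ * u) : ℂ)) (𝓝 0)
          (𝓝 ((h u * 𝓕 φ (u - T)) * (Real.exp (-0 * u) : ℂ))) :=
        Continuous.tendsto (by fun_prop) 0
      simp only [neg_zero, zero_mul, Real.exp_zero, Complex.ofReal_one, mul_one] at this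
      exact this.mono_left nhdsWithin_le_nhds
  -- `H` is bounded on the compact region that matters, which dominates the right-hand integrals.
  obtain ⟨C, hC⟩ : ∃ C, ∀ σ ∈ Set.Icc (0:ℝ) 1, ∀ v ∈ tsupport φ,
      ‖H (σ + 2 * π * v * Complex.I)‖ ≤ C := by
    have hK : IsCompact (Set.Icc (0:ℝ) 1 ×ˢ tsupport φ) := isCompact_Icc.prod hφs
    have hc : ContinuousOn (fun p : ℝ × ℝ => H (p.1 + 2 * π * p.2 * Complex.I))
        (Set.Icc (0:ℝ) 1 ×ˢ tsupport φ) := by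
      refine hH.comp (by fun_prop) ?_
      rintro ⟨a, b⟩ ⟨ha, -⟩
      simpa using ha.1
    obtain ⟨C, hC⟩ := hK.exists_bound_of_continuousOn hc
    exact ⟨C, fun σ hσ v hv => hC (σ, v) ⟨hσ, hv⟩⟩
  have hline : ∀ σ : ℝ, 0 ≤ σ → Continuous (fun v : ℝ => H (σ + 2 * π * v * Complex.I)) := by
    intro σ hσ
    exact hH.comp_continuous (by fun_prop) (fun v => by simpa using hσ)
  have lim2 : Tendsto (fun σ : ℝ => ∫ v : ℝ, f v * H (σ + 2 * π * v * Complex.I))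
      (𝓝[>] 0) (𝓝 (∫ v : ℝ, f v * H (2 * π * v * Complex.I))) := by
    refine tendsto_integral_filter_of_dominated_convergence (fun v => ‖f v‖ * C) ?_ ?_
      (hfi.norm.mul_const C) ?_
    · filter_upwards [self_mem_nhdsWithin] with σ hσ
      exact (hfc.mul (hline σ (le_of_lt hσ))).aestronglyMeasurable
    · filter_upwards [Ioo_mem_nhdsGT (zero_lt_one (α := ℝ))] with σ hσ
      refine ae_of_all _ fun v => ?_
      by_cases hv : v ∈ tsupport φ
      · rw [norm_mul]
        gcongr
        exact hC σ ⟨hσ.1.le, hσ.2.le⟩ v hv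
      · simp [hf, image_eq_zero_of_notMem_tsupport hv]
    · refine ae_of_all _ fun v => Tendsto.const_mul _ ?_
      have h4 : ContinuousWithinAt H {z | 0 ≤ z.re} (2 * π * v * Complex.I) :=
        hH _ (by simp)
      refine h4.tendsto.comp (tendsto_nhdsWithin_iff.2 ⟨?_, ?_⟩)
      · have : Tendsto (fun σ : ℝ => (σ : ℂ) + 2 * π * v * Complex.I) (𝓝 0)
            (𝓝 (((0:ℝ):ℂ) + 2 * π * v * Complex.I)) := Continuous.tendsto (by fun_prop) 0
        simp only [Complex.ofReal_zero, zero_add] at this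
        exact this.mono_left nhdsWithin_le_nhds
      · filter_upwards [self_mem_nhdsWithin] with σ hσ
        simpa using (le_of_lt hσ : (0:ℝ) ≤ σ)
  have lim1' := lim1.congr' (by filter_upwards [self_mem_nhdsWithin] with σ hσ using key σ hσ)
  rw [tendsto_nhds_unique lim1' lim2]
  refine integral_congr_ae (ae_of_all _ fun v => ?_)
  simp only [hf, mul_neg, neg_neg, smul_mul_assoc]

theorem tendsto_smoothed (h : ℝ → ℂ) (hm : Measurable h) (hb : ∀ u, ‖h u‖ ≤ 1)
    (h0 : ∀ u < 0, h u = 0) (H : ℂ → ℂ) (hH : ContinuousOn H {z | 0 ≤ z.re})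
    (hL : ∀ z : ℂ, 0 < z.re → ∫ u : ℝ, h u * Complex.exp (-z * u) = H z)
    (φ : ℝ → ℂ) (hφ : Continuous φ) (hφs : HasCompactSupport φ) (hk : Integrable (𝓕 φ)) :
    Tendsto (fun T : ℝ => ∫ u : ℝ, h u * 𝓕 φ (u - T)) atTop (𝓝 0) := by
  simp_rw [smoothed_eq h hm hb h0 H hH hL φ hφ hφs hk]
  exact (Real.tendsto_integral_exp_smul_cocompact
    (fun v : ℝ => φ v * H (2 * π * v * Complex.I))).comp
    (tendsto_neg_atTop_atBot.mono_right atBot_le_cocompact)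

/-- Tauberian theorem: a bounded function on the half-line that oscillates slowly, and whose Laplace
transform extends continuously to the closed right half-plane, tends to `0` at infinity. -/
theorem tauberian (h : ℝ → ℂ) (hm : Measurable h) (hb : ∀ u, ‖h u‖ ≤ 1)
    (h0 : ∀ u < 0, h u = 0) (hs : ∀ T u, ‖h (T + u) - h T‖ ≤ 2 * |u| + Real.exp (-T))
    (H : ℂ → ℂ) (hH : ContinuousOn H {z | 0 ≤ z.re})
    (hL : ∀ z : ℂ, 0 < z.re → ∫ u : ℝ, h u * Complex.exp (-z * u) = H z) :
    Tendsto h atTop (𝓝 0) := by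
  obtain ⟨b⟩ : Nonempty (ContDiffBump (0:ℝ)) := inferInstance
  have hbc : HasCompactSupport (fun v => (b v : ℂ)) :=
    b.hasCompactSupport.comp_left (g := fun x : ℝ => (x : ℂ)) Complex.ofReal_zero
  have hbd : ContDiff ℝ (⊤ : ℕ∞) (fun v => (b v : ℂ)) :=
    Complex.ofRealCLM.contDiff.comp b.contDiff
  set φ : SchwartzMap ℝ ℂ := hbc.toSchwartzMap hbd with hφ
  set k : SchwartzMap ℝ ℂ := 𝓕 φ with hk
  have hkφ : ∀ w, k w = 𝓕 (φ : ℝ → ℂ) w := fun w => by rw [hk, SchwartzMap.fourier_coe]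
  have hki : Integrable k := k.integrable
  have hkint : ∫ w, k w = 1 := by
    have h1 : 𝓕⁻ k = φ := by rw [hk, FourierTransform.fourierInv_fourier_eq]
    have h2 : (𝓕⁻ k) 0 = 1 := by
      rw [h1]
      change ((b 0 : ℝ) : ℂ) = 1
      rw [b.one_of_mem_closedBall (Metric.mem_closedBall_self b.rIn_pos.le), Complex.ofReal_one]
    rw [SchwartzMap.fourierInv_coe, Real.fourierInv_eq] at h2
    simpa using h2
  have hk1 : Integrable (fun w => |w| * ‖k w‖) := by simpa using k.integrable_pow_mul volume 1
  set A := ∫ w, |w| * ‖k w‖ with hA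
  set A0 := ∫ w, ‖k w‖ with hA0
  have hApos : 0 ≤ A := integral_nonneg fun w => by positivity
  -- `tendsto_smoothed` for `u ↦ h (u / l)`, whose Laplace transform is `z ↦ l * H (l * z)`.
  have main : ∀ l : ℝ, 0 < l → Tendsto (fun T => ∫ w, h (T + w / l) * k w) atTop (𝓝 0) := by
    intro l hl
    have := tendsto_smoothed (fun u => h (u / l)) (by fun_prop) (fun u => hb _)
      (fun u hu => h0 _ (div_neg_of_neg_of_pos hu hl)) (fun z => l * H (l * z))
      (by
        refine continuousOn_const.mul (hH.comp (by fun_prop) ?_)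
        intro z hz
        simpa using mul_nonneg hl.le hz)
      (by
        intro z hz
        rw [← hL (l * z) (by simpa using mul_pos hl hz)]
        have := Measure.integral_comp_div (fun u : ℝ => h u * Complex.exp (-(l * z) * u)) l
        rw [abs_of_pos hl, Complex.real_smul] at this
        rw [← this]
        refine integral_congr_ae (ae_of_all _ fun u => ?_)
        simp only
        congr 2
        have hl' : (l : ℂ) ≠ 0 := by exact_mod_cast hl.ne'
        push_cast
        field_simp) φ φ.continuous hbc
        (by rw [← SchwartzMap.fourier_coe]; exact hki)
    have := this.comp (tendsto_id.const_mul_atTop hl)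
    refine this.congr fun T => ?_
    simp only [Function.comp, id]
    rw [← integral_add_right_eq_self _ (l * T)]
    refine integral_congr_ae (ae_of_all _ fun w => ?_)
    simp only [add_sub_cancel_right, ← hkφ]
    congr 2
    field_simp
    ring
  -- As `∫ k = 1`, the value `h T` differs from the average by the integrated oscillation of `h`.
  have bound : ∀ l : ℝ, 0 < l → ∀ T, ‖h T‖ ≤ ‖∫ w, h (T + w / l) * k w‖ +
      (2 / l * A + Real.exp (-T) * A0) := by
    intro l hl T
    have hi1 : Integrable (fun w => h (T + w / l) * k w) :=
      hki.bdd_mul (c := 1) (hm.comp (by fun_prop)).aestronglyMeasurable (ae_of_all _ fun w => hb _)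
    have e1 : h T = (∫ w, h (T + w / l) * k w) - ∫ w, (h (T + w / l) - h T) * k w := by
      simp only [sub_mul]
      rw [integral_sub hi1 (hki.const_mul _), integral_const_mul, hkint]
      ring
    have e2 : ‖∫ w, (h (T + w / l) - h T) * k w‖ ≤ 2 / l * A + Real.exp (-T) * A0 := by
      rw [hA, hA0, ← integral_const_mul, ← integral_const_mul,
        ← integral_add (hk1.const_mul _) (hki.norm.const_mul _)]
      refine norm_integral_le_of_norm_le ((hk1.const_mul _).add (hki.norm.const_mul _))
        (ae_of_all _ fun w => ?_)
      rw [norm_mul]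
      calc _ ≤ (2 * |w / l| + Real.exp (-T)) * ‖k w‖ := by gcongr; exact hs _ _
        _ = _ := by rw [abs_div, abs_of_pos hl]; ring
    calc ‖h T‖ = _ := congrArg _ e1
      _ ≤ _ := norm_sub_le _ _
      _ ≤ _ := by gcongr
  rw [Metric.tendsto_atTop']
  intro ε hε
  -- The scale `l = (4 A + 1) / ε` makes the error `2 A / l` smaller than `ε / 2`.
  have hl : 0 < (4 * A + 1) / ε := by positivity
  have hlim := (main _ hl).norm.add
    ((Real.tendsto_exp_neg_atTop_nhds_zero.mul_const A0).const_add (2 / ((4 * A + 1) / ε) * A))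
  simp only [norm_zero, zero_mul, add_zero, zero_add] at hlim
  have hlt : 2 / ((4 * A + 1) / ε) * A < ε := by
    rw [div_div_eq_mul_div, div_mul_eq_mul_div, div_lt_iff₀ (by positivity)]
    nlinarith
  obtain ⟨N, hN⟩ := eventually_atTop.1 (hlim.eventually (gt_mem_nhds hlt))
  refine ⟨N, fun T hT => ?_⟩
  rw [dist_zero_right]
  exact (bound _ hl T).trans_lt (hN T hT.le)

/-! ### The Mertens function is o(N) -/

/-- The Mertens function `M(N) = ∑_{1 ≤ n ≤ N} μ(n)`. -/
noncomputable def mertens (N : ℕ) : ℝ := ∑ n ∈ Icc 1 N, (ArithmeticFunction.moebius n : ℝ)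

theorem abs_moebius_le_one_real (n : ℕ) : |(ArithmeticFunction.moebius n : ℝ)| ≤ 1 := by
  exact_mod_cast ArithmeticFunction.abs_moebius_le_one

theorem abs_mertens_sub_le {m n : ℕ} (hmn : m ≤ n) : |mertens n - mertens m| ≤ n - m := by
  induction n, hmn using Nat.le_induction with
  | base => simp
  | succ n hn ih =>
    have h1 : mertens (n + 1) = mertens n + ArithmeticFunction.moebius (n + 1) := by
      rw [mertens, mertens, sum_Icc_succ_top (by omega)]
    have h2 := abs_moebius_le_one_real (n + 1)
    rw [h1]
    push_cast
    rw [abs_le] at *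
    constructor <;> linarith [ih.1, ih.2, h2.1, h2.2]

theorem abs_mertens_le (n : ℕ) : |mertens n| ≤ n := by
  simpa [mertens] using abs_mertens_sub_le (Nat.zero_le n)

/-- The Mertens function in logarithmic scale, `M(e^u) e^{-u}`; it vanishes for `u < 0`. -/
noncomputable def mertensExp (u : ℝ) : ℝ := mertens ⌊Real.exp u⌋₊ * Real.exp (-u)

theorem abs_mertensExp_le (u : ℝ) : |mertensExp u| ≤ 1 := by
  rw [mertensExp, abs_mul, abs_of_pos (Real.exp_pos _)]
  calc _ ≤ Real.exp u * Real.exp (-u) := by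
        gcongr
        exact (abs_mertens_le _).trans (Nat.floor_le (Real.exp_nonneg u))
    _ = 1 := by rw [← Real.exp_add]; simp

theorem mertensExp_of_neg {u : ℝ} (hu : u < 0) : mertensExp u = 0 := by
  have : ⌊Real.exp u⌋₊ = 0 := Nat.floor_eq_zero.2 (by simpa using hu)
  simp [mertensExp, this, mertens]

theorem abs_mertensExp_sub_le {a b : ℝ} (hab : a ≤ b) :
    |mertensExp b - mertensExp a| ≤ 2 * (b - a) + Real.exp (-b) := by
  have hfl : ⌊Real.exp a⌋₊ ≤ ⌊Real.exp b⌋₊ := Nat.floor_mono (Real.exp_le_exp.2 hab)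
  have h1 : |mertens ⌊Real.exp b⌋₊ - mertens ⌊Real.exp a⌋₊| ≤ Real.exp b - Real.exp a + 1 := by
    refine (abs_mertens_sub_le hfl).trans ?_
    linarith [Nat.floor_le (Real.exp_nonneg b), Nat.lt_floor_add_one (Real.exp a)]
  have h2 : |mertens ⌊Real.exp a⌋₊| ≤ Real.exp a :=
    (abs_mertens_le _).trans (Nat.floor_le (Real.exp_nonneg a))
  have hE : Real.exp (-b) ≤ Real.exp (-a) := Real.exp_le_exp.2 (by linarith)
  have e : mertensExp b - mertensExp a =
      (mertens ⌊Real.exp b⌋₊ - mertens ⌊Real.exp a⌋₊) * Real.exp (-b) -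
        mertens ⌊Real.exp a⌋₊ * (Real.exp (-a) - Real.exp (-b)) := by
    rw [mertensExp, mertensExp]; ring
  have hbb : Real.exp b * Real.exp (-b) = 1 := by rw [← Real.exp_add]; simp
  have haa : Real.exp a * Real.exp (-a) = 1 := by rw [← Real.exp_add]; simp
  have hab' : Real.exp a * Real.exp (-b) = Real.exp (a - b) := by rw [← Real.exp_add]; ring_nf
  have h3 := Real.add_one_le_exp (a - b)
  calc _ ≤ (Real.exp b - Real.exp a + 1) * Real.exp (-b) +
        Real.exp a * (Real.exp (-a) - Real.exp (-b)) := by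
        rw [e]
        refine (abs_sub _ _).trans ?_
        rw [abs_mul, abs_mul, abs_of_pos (Real.exp_pos (-b)), abs_of_nonneg (sub_nonneg.2 hE)]
        have := sub_nonneg.2 hE
        gcongr
    _ = 2 * (1 - Real.exp (a - b)) + Real.exp (-b) := by
        linear_combination hbb + haa - 2 * hab'
    _ ≤ _ := by linarith

theorem measurable_mertensExp : Measurable mertensExp := by
  unfold mertensExp
  have h1 : Measurable (fun u : ℝ => mertens ⌊Real.exp u⌋₊) :=
    (measurable_from_nat (f := mertens)).comp (Nat.measurable_floor.comp Real.measurable_exp)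
  exact h1.mul (by fun_prop)

theorem laplace_mertensExp {z : ℂ} (hz : 0 < z.re) :
    ∫ u : ℝ, (mertensExp u : ℂ) * Complex.exp (-z * u) = 1 / ((z + 1) * riemannZeta (z + 1)) := by
  have hs : 1 < (z + 1).re := by simpa using hz
  have hs0 : z + 1 ≠ 0 := fun h => by rw [h] at hs; norm_num at hs
  have hζ : riemannZeta (z + 1) ≠ 0 := riemannZeta_ne_zero_of_one_le_re hs.le
  have h1 := LSeries_eq_mul_integral' (fun n => (ArithmeticFunction.moebius n : ℂ)) zero_le_one hs
    (by
      refine IsBigO.of_bound 1 (Eventually.of_forall fun n => ?_)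
      rw [Real.norm_of_nonneg (sum_nonneg fun _ _ => norm_nonneg _)]
      calc _ ≤ ∑ k ∈ Icc 1 n, (1:ℝ) := by
            refine sum_le_sum fun k _ => ?_
            rw [Complex.norm_intCast]
            exact abs_moebius_le_one_real k
        _ ≤ _ := by simp)
  have h2 := ArithmeticFunction.LSeries_zeta_mul_Lseries_moebius hs
  rw [ArithmeticFunction.LSeries_zeta_eq_riemannZeta hs, h1] at h2
  have h3 := integral_comp_exp_Ioi
    (fun t : ℝ => (∑ k ∈ Icc 1 ⌊t⌋₊, (ArithmeticFunction.moebius k : ℂ)) *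
      (t : ℂ) ^ (-(z + 1 + 1))) 0
  rw [Real.exp_zero] at h3
  rw [← h3] at h2
  have h4 : ∫ u : ℝ, (mertensExp u : ℂ) * Complex.exp (-z * u) =
      ∫ u in Set.Ioi (0:ℝ), (mertensExp u : ℂ) * Complex.exp (-z * u) := by
    rw [← integral_Ici_eq_integral_Ioi, setIntegral_eq_integral_of_forall_compl_eq_zero]
    intro u hu
    rw [mertensExp_of_neg (by simpa using hu)]
    simp
  have h5 : ∫ u in Set.Ioi (0:ℝ), (mertensExp u : ℂ) * Complex.exp (-z * u) =
      ∫ x in Set.Ioi (0:ℝ), Real.exp x • ((∑ k ∈ Icc 1 ⌊Real.exp x⌋₊,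
        (ArithmeticFunction.moebius k : ℂ)) * ((Real.exp x : ℝ) : ℂ) ^ (-(z + 1 + 1))) := by
    refine integral_congr_ae (ae_of_all _ fun u => ?_)
    simp only [mertensExp, mertens]
    rw [Complex.real_smul, Complex.cpow_def_of_ne_zero (by exact_mod_cast (Real.exp_pos u).ne'),
      ← Complex.ofReal_log (Real.exp_nonneg u), Real.log_exp]
    push_cast
    have h6 : Complex.exp (-u) * Complex.exp (-z * u) =
        Complex.exp u * Complex.exp (u * (-(z + 1 + 1))) := by
      rw [← Complex.exp_add, ← Complex.exp_add]; ring_nf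
    linear_combination (∑ k ∈ Icc 1 ⌊Real.exp u⌋₊, (ArithmeticFunction.moebius k : ℂ)) * h6
  rw [h4, h5, eq_div_iff (mul_ne_zero hs0 hζ)]
  linear_combination h2

/-- The prime number theorem in the form `M(N) = o(N)`. -/
theorem tendsto_mertens_div : Tendsto (fun N : ℕ => mertens N / N) atTop (𝓝 0) := by
  -- `W s = (s - 1) ζ(s)`, with the removable singularity at `s = 1` filled in.
  set W := DirichletCharacter.LFunctionTrivChar₁ 1 with hW
  have hW1 : ∀ s, s ≠ 1 → W s = (s - 1) * riemannZeta s := by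
    intro s hs
    rw [hW, DirichletCharacter.LFunctionTrivChar₁, Function.update_of_ne hs,
      DirichletCharacter.LFunctionTrivChar, DirichletCharacter.LFunction_modOne_eq]
  have hW0 : ∀ s : ℂ, 1 ≤ s.re → W s ≠ 0 := by
    intro s hs
    rcases eq_or_ne s 1 with rfl | h1
    · exact DirichletCharacter.LFunctionTrivChar₁_apply_one_ne_zero 1
    · rw [hW1 s h1]
      exact mul_ne_zero (sub_ne_zero.2 h1) (riemannZeta_ne_zero_of_one_le_re hs)
  have hWc : Continuous W := (DirichletCharacter.differentiable_LFunctionTrivChar₁ 1).continuous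
  have key := tauberian (fun u => (mertensExp u : ℂ))
    (Complex.measurable_ofReal.comp measurable_mertensExp)
    (fun u => by rw [Complex.norm_real]; exact abs_mertensExp_le u)
    (fun u hu => by rw [mertensExp_of_neg hu, Complex.ofReal_zero])
    (fun T u => by
      rw [← Complex.ofReal_sub, Complex.norm_real, Real.norm_eq_abs]
      rcases le_total 0 u with hu | hu
      · refine (abs_mertensExp_sub_le (by linarith : T ≤ T + u)).trans ?_
        have : Real.exp (-(T + u)) ≤ Real.exp (-T) := Real.exp_le_exp.2 (by linarith)
        rw [abs_of_nonneg hu]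
        linarith
      · rw [abs_sub_comm]
        refine (abs_mertensExp_sub_le (by linarith : T + u ≤ T)).trans ?_
        rw [abs_of_nonpos hu]
        linarith)
    (fun z => z / ((z + 1) * W (z + 1)))
    (by
      refine continuousOn_id.div (by fun_prop) ?_
      intro z hz
      have hz' : 0 ≤ z.re := hz
      refine mul_ne_zero (fun h => ?_) (hW0 _ (by simpa using hz'))
      have := congrArg Complex.re h
      simp at this
      linarith)
    (fun z hz => by
      have hz0 : z ≠ 0 := fun h => by simp [h] at hz
      rw [laplace_mertensExp hz, hW1 _ (by simpa using hz0), add_sub_cancel_right]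
      have hs : 1 < (z + 1).re := by simpa using hz
      have hs0 : z + 1 ≠ 0 := fun h => by rw [h] at hs; norm_num at hs
      have hζ : riemannZeta (z + 1) ≠ 0 := riemannZeta_ne_zero_of_one_le_re hs.le
      field_simp)
  have key' : Tendsto mertensExp atTop (𝓝 0) := by
    have := (Complex.continuous_re.tendsto _).comp key
    simpa [Function.comp_def] using this
  refine (key'.comp (Real.tendsto_log_atTop.comp tendsto_natCast_atTop_atTop)).congr' ?_
  filter_upwards [eventually_gt_atTop 0] with N hN
  have hN' : (0:ℝ) < N := by exact_mod_cast hN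
  simp only [Function.comp, mertensExp]
  rw [Real.exp_neg, Real.exp_log hN', Nat.floor_natCast, div_eq_mul_inv]

/-! ### Sublinear functions -/

/-- `a N = o(N)`, in the form of a bound valid for every `N`. -/
def Sublinear (a : ℕ → ℝ) : Prop := ∀ ε > 0, ∃ C, ∀ N : ℕ, |a N| ≤ ε * N + C

theorem Sublinear.of_tendsto {a : ℕ → ℝ} (h : Tendsto (fun N : ℕ => a N / N) atTop (𝓝 0)) :
    Sublinear a := by
  intro ε hε
  obtain ⟨N0, hN0⟩ := Metric.tendsto_atTop.1 h ε hε
  refine ⟨∑ n ∈ range (N0 + 1), |a n|, fun N => ?_⟩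
  have hpos : 0 ≤ ∑ n ∈ range (N0 + 1), |a n| := sum_nonneg fun _ _ => abs_nonneg _
  rcases lt_or_ge N (N0 + 1) with hN | hN
  · have := single_le_sum (f := fun n => |a n|) (fun _ _ => abs_nonneg _) (mem_range.2 hN)
    have : 0 ≤ ε * N := by positivity
    linarith
  · have h1 := hN0 N (by omega)
    have hNpos : (0:ℝ) < N := by exact_mod_cast (by omega : 0 < N)
    rw [dist_zero_right, Real.norm_eq_abs, abs_div, abs_of_pos hNpos, div_lt_iff₀ hNpos] at h1
    linarith

theorem Sublinear.tendsto {a : ℕ → ℝ} (h : Sublinear a) :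
    Tendsto (fun N : ℕ => a N / N) atTop (𝓝 0) := by
  rw [Metric.tendsto_atTop]
  intro ε hε
  obtain ⟨C, hC⟩ := h (ε / 2) (by positivity)
  obtain ⟨N0, hN0⟩ := exists_nat_gt (C / (ε / 2))
  refine ⟨N0 + 1, fun N hN => ?_⟩
  have hNpos : (0:ℝ) < N := by exact_mod_cast (by omega : 0 < N)
  have hN0N : (N0:ℝ) ≤ N := by exact_mod_cast (by omega : N0 ≤ N)
  rw [dist_zero_right, Real.norm_eq_abs, abs_div, abs_of_pos hNpos, div_lt_iff₀ hNpos]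
  rw [div_lt_iff₀ (by positivity)] at hN0
  have := hC N
  nlinarith

theorem Sublinear.add {a b : ℕ → ℝ} (ha : Sublinear a) (hb : Sublinear b) :
    Sublinear (fun N => a N + b N) := by
  intro ε hε
  obtain ⟨C, hC⟩ := ha (ε / 2) (by positivity)
  obtain ⟨D, hD⟩ := hb (ε / 2) (by positivity)
  refine ⟨C + D, fun N => (abs_add_le _ _).trans ?_⟩
  linarith [hC N, hD N]

theorem Sublinear.const_mul {a : ℕ → ℝ} (c : ℝ) (ha : Sublinear a) :
    Sublinear (fun N => c * a N) := by
  intro ε hε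
  obtain ⟨C, hC⟩ := ha (ε / (|c| + 1)) (by positivity)
  refine ⟨|c| * C, fun N => ?_⟩
  rw [abs_mul]
  have h1 : |c| * (ε / (|c| + 1)) ≤ ε := by
    rw [mul_div_assoc', div_le_iff₀ (by positivity)]
    nlinarith [abs_nonneg c]
  calc |c| * |a N| ≤ |c| * (ε / (|c| + 1) * N + C) := by gcongr; exact hC N
    _ = |c| * (ε / (|c| + 1)) * N + |c| * C := by ring
    _ ≤ _ := by gcongr

/-! ### Rough numbers -/

/-- `n` has no prime factor below `k`. -/
def Rough (k n : ℕ) : Prop := ∀ p, p.Prime → p < k → ¬ p ∣ n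

theorem rough_succ {k n : ℕ} : Rough (k + 1) n ↔ Rough k n ∧ ¬ (k.Prime ∧ k ∣ n) := by
  constructor
  · intro h
    exact ⟨fun p hp hpk => h p hp (by omega), fun ⟨hk, hd⟩ => h k hk (by omega) hd⟩
  · rintro ⟨h, h'⟩ p hp hpk hd
    rcases Nat.lt_succ_iff_lt_or_eq.1 hpk with h1 | rfl
    · exact h p hp h1 hd
    · exact h' ⟨hp, hd⟩

theorem minFac_of_rough {k n : ℕ} (h1 : Rough k n) (h2 : ¬ Rough (k + 1) n) : n.minFac = k := by
  have h3 : k.Prime ∧ k ∣ n := by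
    by_contra h
    exact h2 (rough_succ.2 ⟨h1, h⟩)
  have hn : n ≠ 1 := fun h => h3.1.one_lt.ne' (Nat.dvd_one.1 (h ▸ h3.2))
  refine le_antisymm (Nat.minFac_le_of_dvd h3.1.two_le h3.2) ?_
  by_contra h
  exact h1 _ (Nat.minFac_prime hn) (not_le.1 h) (Nat.minFac_dvd n)

open Classical in
/-- The sum of `μ` over the integers up to `N` without prime factors below `k`. -/
noncomputable def roughMertens (k N : ℕ) : ℝ :=
  ∑ n ∈ Icc 1 N with Rough k n, (ArithmeticFunction.moebius n : ℝ)

theorem moebius_prime_mul {p m : ℕ} (hp : p.Prime) (h : ¬ p ∣ m) :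
    ArithmeticFunction.moebius (p * m) = - ArithmeticFunction.moebius m := by
  rw [ArithmeticFunction.isMultiplicative_moebius.map_mul_of_coprime
    ((Nat.Prime.coprime_iff_not_dvd hp).2 h), ArithmeticFunction.moebius_apply_prime hp]
  ring

/-- Splitting off the `k`-rough multiples `n = k m` of the prime `k`: only those with `k ∤ m` have
`μ(n) ≠ 0`, and then `μ(n) = -μ(m)`. -/
theorem roughMertens_step {k : ℕ} (hk : k.Prime) (N : ℕ) :
    roughMertens (k + 1) N = roughMertens k N + roughMertens (k + 1) (N / k) := by
  classical
  have h1 : roughMertens k N = roughMertens (k + 1) N +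
      ∑ n ∈ Icc 1 N with (Rough k n ∧ k ∣ n), (ArithmeticFunction.moebius n : ℝ) := by
    unfold roughMertens
    rw [← sum_filter_add_sum_filter_not (s := (Icc 1 N).filter (Rough k)) (p := fun n => ¬ k ∣ n),
      filter_filter, filter_filter]
    congr 2
    · ext n; simp [rough_succ, hk]
    · ext n; simp
  have h2 : ∑ m ∈ Icc 1 (N / k) with Rough (k + 1) m, -(ArithmeticFunction.moebius m : ℝ) =
      ∑ n ∈ Icc 1 N with (Rough k n ∧ k ∣ n), (ArithmeticFunction.moebius n : ℝ) := by
    refine sum_of_injOn (fun m => k * m) ?_ ?_ ?_ ?_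
    · intro a _ b _ h
      exact Nat.eq_of_mul_eq_mul_left hk.pos h
    · intro m hm
      simp only [coe_filter, mem_Icc, Set.mem_ofPred] at hm ⊢
      obtain ⟨⟨hm1, hm2⟩, hm3⟩ := hm
      refine ⟨⟨Nat.mul_pos hk.pos hm1, ?_⟩, ?_, dvd_mul_right _ _⟩
      · rw [mul_comm]; exact (Nat.le_div_iff_mul_le hk.pos).1 hm2
      · intro p hp hpk hd
        rcases (Nat.Prime.dvd_mul hp).1 hd with h | h
        · exact hpk.ne ((Nat.prime_dvd_prime_iff_eq hp hk).1 h)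
        · exact hm3 p hp (by omega) h
    · intro n hn hn'
      simp only [mem_filter, mem_Icc] at hn
      obtain ⟨⟨hn1, hn2⟩, hn3, m, rfl⟩ := hn
      -- An element outside the image is divisible by `k ^ 2`.
      have hkm : k ∣ m := by
        by_contra hkm
        refine hn' ⟨m, ?_, rfl⟩
        simp only [coe_filter, mem_Icc, Set.mem_ofPred]
        refine ⟨⟨Nat.pos_of_mul_pos_left hn1, ?_⟩, rough_succ.2 ⟨?_, fun h => hkm h.2⟩⟩
        · rw [Nat.le_div_iff_mul_le hk.pos, mul_comm]; exact hn2
        · exact fun p hp hpk hd => hn3 p hp hpk (hd.mul_left k)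
      have : ¬ Squarefree (k * m) := by
        intro hs
        exact hk.one_lt.ne' (Nat.isUnit_iff.1 (hs k (mul_dvd_mul_left k hkm)))
      rw [ArithmeticFunction.moebius_eq_zero_of_not_squarefree this]
      simp
    · intro m hm
      rw [moebius_prime_mul hk fun h => (rough_succ.1 (mem_filter.1 hm).2).2 ⟨hk, h⟩]
      push_cast
      rfl
  rw [h1, ← h2, sum_neg_distrib]
  unfold roughMertens
  ring

theorem abs_roughMertens_le (k N : ℕ) : |roughMertens k N| ≤ N := by
  classical
  unfold roughMertens
  refine (abs_sum_le_sum_abs _ _).trans ?_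
  calc _ ≤ ∑ n ∈ Icc 1 N with Rough k n, (1:ℝ) :=
        sum_le_sum fun n _ => abs_moebius_le_one_real n
    _ ≤ _ := by
      rw [sum_const, nsmul_eq_mul, mul_one]
      exact_mod_cast (card_filter_le _ _).trans (by simp)

theorem sublinear_roughMertens (k : ℕ) : Sublinear (roughMertens k) := by
  induction k with
  | zero =>
    refine Sublinear.of_tendsto (tendsto_mertens_div.congr fun N => ?_)
    congr 1
    unfold mertens roughMertens
    classical
    rw [filter_true_of_mem]
    intro n _ p _ hp
    omega
  | succ k ih =>
    by_cases hk : k.Prime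
    swap
    · have : roughMertens (k + 1) = roughMertens k := by
        ext N
        unfold roughMertens
        congr 1
        ext n
        simp [rough_succ, hk]
      rwa [this]
    -- Each use of the recursion halves the linear coefficient `1 / 2 ^ j`, as `N / k ≤ N / 2`.
    have step : ∀ ε > 0, ∀ j : ℕ, ∃ C, ∀ N : ℕ,
        |roughMertens (k + 1) N| ≤ (2 * ε + 1 / 2 ^ j) * N + C := by
      intro ε hε j
      induction j with
      | zero =>
        refine ⟨0, fun N => (abs_roughMertens_le _ _).trans ?_⟩
        have : 0 ≤ 2 * ε * N := by positivity
        simp only [pow_zero, div_one, add_zero]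
        linarith
      | succ j ihj =>
        obtain ⟨C, hC⟩ := ihj
        obtain ⟨D, hD⟩ := ih ε hε
        refine ⟨C + D, fun N => ?_⟩
        rw [roughMertens_step hk]
        refine (abs_add_le _ _).trans ?_
        have h1 : ((N / k : ℕ) : ℝ) ≤ N / 2 := by
          refine Nat.cast_div_le.trans ?_
          gcongr
          exact_mod_cast hk.two_le
        calc _ ≤ (ε * N + D) + ((2 * ε + 1 / 2 ^ j) * (N / k : ℕ) + C) :=
              add_le_add (hD N) (hC _)
          _ ≤ (ε * N + D) + ((2 * ε + 1 / 2 ^ j) * (N / 2) + C) := by gcongr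
          _ = _ := by rw [pow_succ]; field_simp; ring
    intro ε hε
    obtain ⟨j, hj⟩ := exists_pow_lt_of_lt_one (show 0 < ε / 2 by positivity)
      (show (1/2:ℝ) < 1 by norm_num)
    obtain ⟨C, hC⟩ := step (ε / 4) (by positivity) j
    refine ⟨C, fun N => (hC N).trans ?_⟩
    rw [one_div_pow] at hj
    gcongr
    linarith

/-- The `k`-rough numbers have arbitrarily small upper density for large `k`, because
`∏_{p < k} (1 - 1/p) ≤ exp (-∑_{p < k} 1/p)` and the sum of the reciprocals of the primes diverges. -/
theorem exists_rough_density {ε : ℝ} (hε : 0 < ε) : ∃ k : ℕ, ∃ C : ℝ, ∀ N : ℕ,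
    ∀ s ⊆ Icc 1 N, (∀ n ∈ s, Rough k n) → (s.card : ℝ) ≤ ε * N + C := by
  classical
  have hdiv : Tendsto (fun k : ℕ => ∑ p ∈ range k with p.Prime, (1:ℝ) / p) atTop atTop := by
    have := (not_summable_iff_tendsto_nat_atTop_of_nonneg (fun n => by
      refine Set.indicator_nonneg (fun _ _ => ?_) n; positivity)).1 not_summable_one_div_on_primes
    refine this.congr fun k => ?_
    rw [sum_filter]
    exact sum_congr rfl fun p _ => by simp [Set.indicator_apply]
  obtain ⟨k, hk⟩ := ((Real.tendsto_exp_neg_atTop_nhds_zero.comp hdiv).eventually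
    (gt_mem_nhds hε)).exists
  simp only [Function.comp] at hk
  set S := (range k).filter Nat.Prime with hS
  set Q := ∏ p ∈ S, p with hQ
  have hSp : ∀ p ∈ S, p.Prime := fun p hp => (mem_filter.1 hp).2
  have hQ0 : Q ≠ 0 := prod_ne_zero_iff.2 fun p hp => (hSp p hp).ne_zero
  have hQf : Q.primeFactors = S := Nat.primeFactors_prod hSp
  have hφ : (Nat.totient Q : ℝ) ≤ ε * Q := by
    have h1 := Nat.totient_eq_mul_prod_factors Q
    have h2 : (Nat.totient Q : ℝ) = Q * ∏ p ∈ S, (1 - (p:ℝ)⁻¹) := by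
      rw [hQf] at h1
      have h1' := congrArg (fun x : ℚ => (x : ℝ)) h1
      push_cast at h1'
      exact h1'
    have h3 : ∏ p ∈ S, (1 - (p:ℝ)⁻¹) ≤ Real.exp (-∑ p ∈ S, (1:ℝ) / p) := by
      rw [← sum_neg_distrib, Real.exp_sum]
      refine prod_le_prod (fun p hp => ?_) fun p _ => ?_
      · have : (1:ℝ) ≤ p := by exact_mod_cast (hSp p hp).one_lt.le
        have := inv_le_one_of_one_le₀ this
        linarith
      · have := Real.add_one_le_exp (-((1:ℝ) / p))
        rw [one_div] at *
        linarith
    rw [h2, mul_comm ε]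
    gcongr
    exact h3.trans hk.le
  refine ⟨k, Nat.totient Q, fun N s hs hr => ?_⟩
  have hsub : s ⊆ (Ico 1 (1 + N)).filter (Nat.Coprime Q) := by
    intro n hn
    have := mem_Icc.1 (hs hn)
    refine mem_filter.2 ⟨mem_Ico.2 ⟨this.1, by omega⟩, ?_⟩
    refine Nat.Coprime.prod_left fun p hp => ?_
    rw [Nat.Prime.coprime_iff_not_dvd (hSp p hp)]
    exact hr n hn p (hSp p hp) (mem_range.1 (mem_filter.1 hp).1)
  have h1 := (card_le_card hsub).trans (Nat.Ico_filter_coprime_le 1 N hQ0)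
  have hQpos : (0:ℝ) < Q := by exact_mod_cast Nat.pos_of_ne_zero hQ0
  calc (s.card : ℝ) ≤ ((Nat.totient Q * (N / Q + 1) : ℕ) : ℝ) := by exact_mod_cast h1
    _ = Nat.totient Q * ((N / Q : ℕ) : ℝ) + Nat.totient Q := by push_cast; ring
    _ ≤ Nat.totient Q * (N / Q : ℝ) + Nat.totient Q := by gcongr; exact Nat.cast_div_le
    _ ≤ ε * Q * (N / Q : ℝ) + Nat.totient Q := by gcongr
    _ = _ := by field_simp

/-- The coefficient `μ(n) f(p(n))` for `n ≥ 2`, extended by `0` to `n ≤ 1`. -/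
noncomputable def dualCoeff (f : ℕ → ℝ) (n : ℕ) : ℝ :=
  if n ≤ 1 then 0 else (ArithmeticFunction.moebius n : ℝ) * f n.minFac

theorem abs_dualCoeff_le {f : ℕ → ℝ} {B : ℝ} (hf : ∀ n, |f n| ≤ B) (n : ℕ) :
    |dualCoeff f n| ≤ B := by
  have hB : 0 ≤ B := (abs_nonneg _).trans (hf 0)
  unfold dualCoeff
  split_ifs
  · simpa using hB
  · rw [abs_mul]
    exact (mul_le_of_le_one_left (abs_nonneg _) (abs_moebius_le_one_real n)).trans (hf _)

open Classical in
/-- The numbers that are `k`-rough but not `(k + 1)`-rough are those with least prime factor `k`, so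
each increment of `k` adds `f k` times a difference of two rough Mertens sums. -/
theorem sublinear_sum_not_rough (f : ℕ → ℝ) (k : ℕ) :
    Sublinear (fun N => ∑ n ∈ Icc 1 N with ¬ Rough k n, dualCoeff f n) := by
  induction k with
  | zero =>
    have : ∀ n, Rough 0 n := fun n p _ hp => by omega
    simp only [this, not_true, filter_false, sum_empty]
    exact fun ε hε => ⟨0, fun N => by simp; positivity⟩
  | succ k ih =>
    have h := (ih.add ((sublinear_roughMertens k).const_mul (f k))).add
      ((sublinear_roughMertens (k + 1)).const_mul (- f k))
    convert h using 2 with N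
    have e1 : roughMertens k N = roughMertens (k + 1) N +
        ∑ n ∈ Icc 1 N with (Rough k n ∧ ¬ Rough (k + 1) n),
          (ArithmeticFunction.moebius n : ℝ) := by
      unfold roughMertens
      rw [← sum_filter_add_sum_filter_not (s := (Icc 1 N).filter (Rough k)) (p := Rough (k + 1)),
        filter_filter, filter_filter]
      congr 2
      ext n
      simp only [mem_filter]
      have := @rough_succ k n
      tauto
    have e2 : ∑ n ∈ Icc 1 N with ¬ Rough (k + 1) n, dualCoeff f n =
        (∑ n ∈ Icc 1 N with ¬ Rough k n, dualCoeff f n) +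
          ∑ n ∈ Icc 1 N with (Rough k n ∧ ¬ Rough (k + 1) n), dualCoeff f n := by
      rw [← sum_filter_add_sum_filter_not
        (s := (Icc 1 N).filter (fun n => ¬ Rough (k + 1) n)) (p := fun n => ¬ Rough k n),
        filter_filter, filter_filter]
      congr 2
      · ext n
        simp only [mem_filter]
        have := @rough_succ k n
        tauto
      · ext n
        simp only [mem_filter]
        tauto
    have e3 : ∑ n ∈ Icc 1 N with (Rough k n ∧ ¬ Rough (k + 1) n), dualCoeff f n =
        f k * ∑ n ∈ Icc 1 N with (Rough k n ∧ ¬ Rough (k + 1) n),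
          (ArithmeticFunction.moebius n : ℝ) := by
      rw [mul_sum]
      refine sum_congr rfl fun n hn => ?_
      obtain ⟨hn1, hn2, hn3⟩ := mem_filter.1 hn
      have h1 : ¬ n ≤ 1 := by
        intro h
        have : n = 1 := le_antisymm h (mem_Icc.1 hn1).1
        subst this
        exact hn3 fun p hp _ hd => hp.one_lt.ne' (Nat.dvd_one.1 hd)
      rw [dualCoeff, if_neg h1, minFac_of_rough hn2 hn3, mul_comm]
    rw [e2, e3, e1]
    ring

theorem sublinear_sum_dualCoeff {f : ℕ → ℝ} {B : ℝ} (hf : ∀ n, |f n| ≤ B) :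
    Sublinear (fun N => ∑ n ∈ Icc 1 N, dualCoeff f n) := by
  classical
  have hB : 0 ≤ B := (abs_nonneg _).trans (hf 0)
  intro ε hε
  obtain ⟨k, C, hC⟩ := exists_rough_density (show 0 < ε / (2 * (B + 1)) by positivity)
  obtain ⟨D, hD⟩ := sublinear_sum_not_rough f k (ε / 2) (by positivity)
  refine ⟨D + B * C, fun N => ?_⟩
  beta_reduce
  rw [← sum_filter_add_sum_filter_not (s := Icc 1 N) (p := fun n => ¬ Rough k n)]
  refine (abs_add_le _ _).trans ?_
  have h1 := hC N ((Icc 1 N).filter (fun n => ¬ ¬ Rough k n)) (filter_subset _ _)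
    (fun n hn => not_not.1 (mem_filter.1 hn).2)
  have h2 : |∑ n ∈ Icc 1 N with ¬ ¬ Rough k n, dualCoeff f n| ≤
      B * (ε / (2 * (B + 1)) * N + C) := by
    refine (abs_sum_le_sum_abs _ _).trans ?_
    refine (sum_le_sum fun n _ => abs_dualCoeff_le hf n).trans ?_
    rw [sum_const, nsmul_eq_mul, mul_comm]
    gcongr
  have h3 : B * (ε / (2 * (B + 1))) ≤ ε / 2 := by
    rw [mul_div_assoc', div_le_iff₀ (by positivity)]
    nlinarith
  calc _ ≤ (ε / 2 * N + D) + B * (ε / (2 * (B + 1)) * N + C) := add_le_add (hD N) h2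
    _ = ε / 2 * N + B * (ε / (2 * (B + 1))) * N + (D + B * C) := by ring
    _ ≤ ε / 2 * N + ε / 2 * N + (D + B * C) := by gcongr
    _ = _ := by ring

/-! ### Axer's theorem -/

/-- Abel's inequality for a nonnegative antitone weight `a` on `(m, N]`. -/
theorem abs_sum_mul_antitone_le (g a : ℕ → ℝ) {A : ℝ} {m N : ℕ} (hmN : m ≤ N)
    (ha : ∀ n, m < n → a (n + 1) ≤ a n) (ha0 : ∀ n, 0 ≤ a n)
    (hG : ∀ n ≤ N, |∑ d ∈ Icc 1 n, g d| ≤ A) :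
    |∑ d ∈ Ioc m N, g d * a d| ≤ 2 * A * a (m + 1) := by
  have hdiff : ∀ n ≤ N, |∑ d ∈ Icc 1 n, g d - ∑ d ∈ Icc 1 m, g d| ≤ 2 * A := fun n hn =>
    (abs_sub _ _).trans (by linarith [hG n hn, hG m hmN])
  have key : ∀ n, m ≤ n → n ≤ N → |∑ d ∈ Ioc m n, g d * a d -
      (∑ d ∈ Icc 1 n, g d - ∑ d ∈ Icc 1 m, g d) * a (n + 1)| ≤
        2 * A * (a (m + 1) - a (n + 1)) := by
    intro n hn
    induction n, hn using Nat.le_induction with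
    | base => intro _; simp
    | succ n hn ih =>
      intro hnN
      have ih' := ih (by omega)
      have e : ∑ d ∈ Ioc m (n + 1), g d * a d -
          (∑ d ∈ Icc 1 (n + 1), g d - ∑ d ∈ Icc 1 m, g d) * a (n + 1 + 1) =
          (∑ d ∈ Ioc m n, g d * a d -
            (∑ d ∈ Icc 1 n, g d - ∑ d ∈ Icc 1 m, g d) * a (n + 1)) +
          (∑ d ∈ Icc 1 (n + 1), g d - ∑ d ∈ Icc 1 m, g d) * (a (n + 1) - a (n + 1 + 1)) := by
        rw [sum_Ioc_succ_top hn, sum_Icc_succ_top (by omega)]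
        ring
      rw [e]
      refine (abs_add_le _ _).trans ?_
      have h1 := sub_nonneg.2 (ha (n + 1) (by omega))
      have h2 : |(∑ d ∈ Icc 1 (n + 1), g d - ∑ d ∈ Icc 1 m, g d) * (a (n + 1) - a (n + 1 + 1))|
          ≤ 2 * A * (a (n + 1) - a (n + 1 + 1)) := by
        rw [abs_mul, abs_of_nonneg h1]
        exact mul_le_mul_of_nonneg_right (hdiff _ hnN) h1
      linarith
  have h1 := key N hmN le_rfl
  have h2 : |(∑ d ∈ Icc 1 N, g d - ∑ d ∈ Icc 1 m, g d) * a (N + 1)| ≤ 2 * A * a (N + 1) := by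
    rw [abs_mul, abs_of_nonneg (ha0 _)]
    exact mul_le_mul_of_nonneg_right (hdiff N le_rfl) (ha0 _)
  have h3 := abs_add_le (∑ d ∈ Ioc m N, g d * a d -
      (∑ d ∈ Icc 1 N, g d - ∑ d ∈ Icc 1 m, g d) * a (N + 1))
      ((∑ d ∈ Icc 1 N, g d - ∑ d ∈ Icc 1 m, g d) * a (N + 1))
  rw [sub_add_cancel] at h3
  linarith

/-- Axer's theorem: if `g` is bounded with partial sums `o(N)`, then `∑_{d ≤ N} g(d) {N/d} = o(N)`.
The range `d ≤ N / K` is estimated trivially; on `N / K < d ≤ N` both `N / d` and `⌊N / d⌋` are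
antitone and at most `K`. -/
theorem axer {g : ℕ → ℝ} {B : ℝ} (hg : ∀ n, |g n| ≤ B)
    (hG : Sublinear (fun N => ∑ n ∈ Icc 1 N, g n)) :
    Sublinear (fun N => ∑ d ∈ Icc 1 N, g d * ((N:ℝ) / d - (N / d : ℕ))) := by
  have hB : 0 ≤ B := (abs_nonneg _).trans (hg 0)
  intro ε hε
  obtain ⟨K, hK⟩ := exists_nat_gt (B / (ε / 2))
  have hKpos : (0:ℝ) < K := lt_of_le_of_lt (by positivity) hK
  have hKpos' : 0 < K := by exact_mod_cast hKpos
  rw [div_lt_iff₀ (by positivity)] at hK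
  obtain ⟨C, hC⟩ := hG (ε / (8 * K)) (by positivity)
  refine ⟨4 * K * C, fun N => ?_⟩
  set m := N / K with hm
  set A := ε / (8 * K) * N + C with hA
  have hmN : m ≤ N := Nat.div_le_self _ _
  have hGA : ∀ n ≤ N, |∑ d ∈ Icc 1 n, g d| ≤ A := fun n hn => (hC n).trans (by
    rw [hA]; gcongr)
  have hA0 : 0 ≤ A := (abs_nonneg _).trans (hGA 0 (Nat.zero_le _))
  have hK1 : (N:ℝ) / ((m + 1 : ℕ) : ℝ) ≤ K := by
    rw [div_le_iff₀ (by positivity), mul_comm]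
    exact_mod_cast ((Nat.div_lt_iff_lt_mul hKpos').1 (Nat.lt_succ_self (N / K))).le
  have hsplit : ∑ d ∈ Icc 1 N, g d * ((N:ℝ) / d - (N / d : ℕ)) =
      ∑ d ∈ Icc 1 m, g d * ((N:ℝ) / d - (N / d : ℕ)) +
      (∑ d ∈ Ioc m N, g d * ((N:ℝ) / d) - ∑ d ∈ Ioc m N, g d * ((N / d : ℕ) : ℝ)) := by
    rw [← sum_sub_distrib]
    simp only [← mul_sub]
    rw [show Icc 1 N = Ioc 0 N from rfl, show Icc 1 m = Ioc 0 m from rfl,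
      sum_Ioc_consecutive _ (Nat.zero_le m) hmN]
  have p1 : |∑ d ∈ Icc 1 m, g d * ((N:ℝ) / d - (N / d : ℕ))| ≤ ε / 2 * N := by
    refine (abs_sum_le_sum_abs _ _).trans ?_
    calc _ ≤ ∑ d ∈ Icc 1 m, B := by
          refine sum_le_sum fun d _ => ?_
          rw [abs_mul]
          have h1 : ((N / d : ℕ) : ℝ) ≤ (N:ℝ) / d := Nat.cast_div_le
          have h2 : (N:ℝ) / d - (N / d : ℕ) ≤ 1 := by
            rw [← Nat.floor_div_eq_div (K := ℝ)]
            linarith [Nat.lt_floor_add_one ((N:ℝ) / d)]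
          rw [abs_of_nonneg (sub_nonneg.2 h1)]
          calc _ ≤ B * 1 := by
                gcongr
                exact hg d
            _ = B := mul_one B
      _ = m * B := by simp
      _ ≤ (N / K) * B := by gcongr; exact Nat.cast_div_le
      _ ≤ ε / 2 * N := by
        rw [div_mul_eq_mul_div, div_le_iff₀ hKpos]
        nlinarith [(Nat.cast_nonneg N : (0:ℝ) ≤ N)]
  have p2 : |∑ d ∈ Ioc m N, g d * ((N:ℝ) / d)| ≤ 2 * A * K := by
    refine (abs_sum_mul_antitone_le g (fun d => (N:ℝ) / d) hmN (fun n hn => ?_)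
      (fun n => by positivity) hGA).trans (by gcongr)
    have : (0:ℝ) < n := by exact_mod_cast Nat.zero_lt_of_lt hn
    gcongr
    omega
  have p3 : |∑ d ∈ Ioc m N, g d * ((N / d : ℕ) : ℝ)| ≤ 2 * A * K := by
    refine (abs_sum_mul_antitone_le g (fun d => ((N / d : ℕ) : ℝ)) hmN (fun n hn => ?_)
      (fun n => by positivity) hGA).trans ?_
    · exact_mod_cast Nat.div_le_div_left (Nat.le_succ n) (Nat.zero_lt_of_lt hn)
    · exact mul_le_mul_of_nonneg_left (Nat.cast_div_le.trans hK1) (by positivity)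
  beta_reduce
  rw [hsplit]
  refine (abs_add_le _ _).trans ?_
  have h4 := abs_sub (∑ d ∈ Ioc m N, g d * ((N:ℝ) / d)) (∑ d ∈ Ioc m N, g d * ((N / d : ℕ) : ℝ))
  have h5 : 4 * A * K = ε / 2 * N + 4 * K * C := by
    rw [hA]; field_simp; ring
  linarith

/-! ### The duality identity -/

theorem maxPrimeFac_prime_dvd {n : ℕ} (hn : 2 ≤ n) :
    (maxPrimeFac n).Prime ∧ maxPrimeFac n ∣ n := by
  have hne : n.primeFactors.Nonempty := Nat.nonempty_primeFactors.2 (by omega)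
  obtain ⟨p, hp, h⟩ := exists_mem_eq_sup _ hne id
  rw [maxPrimeFac, h]
  exact ⟨Nat.prime_of_mem_primeFactors hp, Nat.dvd_of_mem_primeFactors hp⟩

theorem le_maxPrimeFac {n p : ℕ} (hn : n ≠ 0) (hp : p.Prime) (h : p ∣ n) : p ≤ maxPrimeFac n :=
  le_sup (f := id) (Nat.mem_primeFactors.2 ⟨hp, h, hn⟩)

/-- Multiplying `d ≠ 1` by the largest prime factor of `n` does not change the least prime factor. -/
theorem dualCoeff_mul_maxPrimeFac (f : ℕ → ℝ) {n d : ℕ} (hn : 2 ≤ n) (hd : d ∣ n) (hd1 : d ≠ 1)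
    (hP : ¬ maxPrimeFac n ∣ d) : dualCoeff f (maxPrimeFac n * d) = - dualCoeff f d := by
  obtain ⟨hPp, -⟩ := maxPrimeFac_prime_dvd hn
  have hd0 : 0 < d := Nat.pos_of_dvd_of_pos hd (by omega)
  have hq := Nat.minFac_prime hd1
  have hmin : (maxPrimeFac n * d).minFac = d.minFac := by
    refine le_antisymm (Nat.minFac_le_of_dvd hq.two_le ((Nat.minFac_dvd d).mul_left _)) ?_
    have hne : maxPrimeFac n * d ≠ 1 := fun h => hPp.ne_one (mul_eq_one.1 h).1
    have hr := Nat.minFac_prime hne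
    rcases (Nat.Prime.dvd_mul hr).1 (Nat.minFac_dvd (maxPrimeFac n * d)) with h | h
    · rw [(Nat.prime_dvd_prime_iff_eq hr hPp).1 h]
      exact le_maxPrimeFac (by omega) hq ((Nat.minFac_dvd d).trans hd)
    · exact Nat.minFac_le_of_dvd hr.two_le h
  have h1 : ¬ d ≤ 1 := by omega
  have h2 : ¬ maxPrimeFac n * d ≤ 1 := by
    have := Nat.le_mul_of_pos_left d hPp.pos
    omega
  rw [dualCoeff, dualCoeff, if_neg h1, if_neg h2, hmin, moebius_prime_mul hPp hP]
  push_cast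
  ring

/-- Alladi's duality identity. The divisors prime to `P = maxPrimeFac n` are paired with their
multiples by `P`; all pairs cancel except `{1, P}`. -/
theorem sum_divisors_dualCoeff (f : ℕ → ℝ) {n : ℕ} (hn : 2 ≤ n) :
    ∑ d ∈ n.divisors, dualCoeff f d = - f (maxPrimeFac n) := by
  classical
  obtain ⟨hPp, hPn⟩ := maxPrimeFac_prime_dvd hn
  set P := maxPrimeFac n with hP
  have hn0 : n ≠ 0 := by omega
  rw [← sum_filter_add_sum_filter_not (s := n.divisors) (p := fun d => P ∣ d)]
  have h1 : ∑ d ∈ n.divisors with P ∣ d, dualCoeff f d =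
      ∑ d ∈ n.divisors with ¬ P ∣ d, dualCoeff f (P * d) := by
    symm
    refine sum_of_injOn (fun d => P * d) ?_ ?_ ?_ ?_
    · intro a _ b _ h
      exact Nat.eq_of_mul_eq_mul_left hPp.pos h
    · intro d hd
      simp only [coe_filter, Nat.mem_divisors, Set.mem_ofPred] at hd ⊢
      exact ⟨⟨((Nat.Prime.coprime_iff_not_dvd hPp).2 hd.2).mul_dvd_of_dvd_of_dvd hPn hd.1.1, hn0⟩,
        dvd_mul_right _ _⟩
    · intro d hd hd'
      simp only [mem_filter, Nat.mem_divisors] at hd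
      obtain ⟨⟨hdn, -⟩, e, rfl⟩ := hd
      have hPe : P ∣ e := by
        by_contra h
        refine hd' ⟨e, ?_, rfl⟩
        simp only [coe_filter, Nat.mem_divisors, Set.mem_ofPred]
        exact ⟨⟨(dvd_mul_left e P).trans hdn, hn0⟩, h⟩
      have : ¬ Squarefree (P * e) := by
        intro hs
        exact hPp.one_lt.ne' (Nat.isUnit_iff.1 (hs P (mul_dvd_mul_left P hPe)))
      simp [dualCoeff, ArithmeticFunction.moebius_eq_zero_of_not_squarefree this]
    · intro d _; rfl
  rw [h1, ← sum_add_distrib, sum_eq_single_of_mem 1]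
  · have h2 : ¬ P ≤ 1 := not_le.2 hPp.one_lt
    simp [dualCoeff, h2, hPp.minFac_eq, ArithmeticFunction.moebius_apply_prime hPp]
  · simp [hn0, hPp.ne_one]
  · intro d hd hd1
    simp only [mem_filter, Nat.mem_divisors] at hd
    rw [hP, dualCoeff_mul_maxPrimeFac f hn hd.1.1 hd1 hd.2]
    ring

theorem sum_maxPrimeFac (f : ℕ → ℝ) (N : ℕ) :
    ∑ n ∈ Icc 2 N, f (maxPrimeFac n) = - ∑ d ∈ Icc 1 N, dualCoeff f d * ((N / d : ℕ) : ℝ) := by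
  let g : ArithmeticFunction ℝ := ⟨dualCoeff f, by simp [dualCoeff]⟩
  have h := ArithmeticFunction.sum_Ioc_mul_zeta_eq_sum g N
  simp only [ArithmeticFunction.coe_mul_zeta_apply] at h
  have hg : ∀ d, g d = dualCoeff f d := fun d => rfl
  simp only [hg] at h
  rw [show Icc 1 N = Ioc 0 N from rfl, ← h, ← sum_neg_distrib]
  refine sum_subset_zero_on_sdiff (fun n hn => ?_) (fun n hn => ?_) (fun n hn => ?_)
  · rw [mem_Icc] at hn; rw [mem_Ioc]; omega
  · have : n = 1 := by
      rw [Finset.mem_sdiff, mem_Icc, mem_Ioc] at hn; omega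
    subst this
    simp [dualCoeff]
  · rw [sum_divisors_dualCoeff f (mem_Icc.1 hn).1, neg_neg]

theorem sum_dualCoeff_div (f : ℕ → ℝ) (N : ℕ) :
    ∑ n ∈ Icc 2 N, (ArithmeticFunction.moebius n : ℝ) * f (Nat.minFac n) / n =
      ∑ d ∈ Icc 1 N, dualCoeff f d / d := by
  refine sum_subset_zero_on_sdiff (fun n hn => ?_) (fun n hn => ?_) (fun n hn => ?_)
  · rw [mem_Icc] at *; omega
  · have : n ≤ 1 := by
      rw [Finset.mem_sdiff, mem_Icc, mem_Icc] at hn; omega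
    simp [dualCoeff, this]
  · have : ¬ n ≤ 1 := by rw [mem_Icc] at hn; omega
    rw [dualCoeff, if_neg this]

/-! ### From real to natural arguments, and the duality theorem -/

theorem tendsto_comp_floor_iff (a : ℕ → ℝ) (l : ℝ) :
    Tendsto (fun x : ℝ => a ⌊x⌋₊) atTop (𝓝 l) ↔ Tendsto a atTop (𝓝 l) := by
  constructor
  · intro h
    simpa [Function.comp_def] using h.comp tendsto_natCast_atTop_atTop
  · exact fun h => h.comp tendsto_nat_floor_atTop

theorem isLittleO_iff_tendsto_div (S : ℕ → ℝ) (δ : ℝ) :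
    ((fun x : ℝ => S ⌊x⌋₊ - δ * x) =o[atTop] fun x : ℝ => x) ↔
      Tendsto (fun N : ℕ => S N / N) atTop (𝓝 δ) := by
  rw [isLittleO_iff_tendsto' (by
    filter_upwards [eventually_gt_atTop 0] with x hx h
    exact absurd h hx.ne')]
  rw [← tendsto_comp_floor_iff (fun N => S N / N)]
  have hfl : Tendsto (fun x : ℝ => (⌊x⌋₊ : ℝ) / x) atTop (𝓝 1) := tendsto_nat_floor_div_atTop
  constructor
  · intro h
    have h1 := (h.add_const δ).div hfl one_ne_zero
    rw [zero_add, div_one] at h1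
    refine h1.congr' ?_
    filter_upwards [eventually_ge_atTop 1] with x hx
    have hx0 : x ≠ 0 := by positivity
    have hf0 : (⌊x⌋₊ : ℝ) ≠ 0 := by
      exact_mod_cast (Nat.floor_pos.2 hx).ne'
    simp only [Pi.div_apply]
    field_simp
    ring
  · intro h
    have h1 := (h.mul hfl).sub_const δ
    rw [mul_one, sub_self] at h1
    refine h1.congr' ?_
    filter_upwards [eventually_ge_atTop 1] with x hx
    have hx0 : x ≠ 0 := by positivity
    have hf0 : (⌊x⌋₊ : ℝ) ≠ 0 := by
      exact_mod_cast (Nat.floor_pos.2 hx).ne'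
    field_simp

/-- Alladi's duality theorem. -/
theorem alladi_duality (f : ℕ → ℝ) (B : ℝ) (hf : ∀ n, |f n| ≤ B) (δ : ℝ) :
    ((fun x : ℝ => (∑ n ∈ Finset.Icc 2 ⌊x⌋₊, f (maxPrimeFac n)) - δ * x)
        =o[atTop] fun x : ℝ => x) ↔
      Tendsto
        (fun x : ℝ => ∑ n ∈ Finset.Icc 2 ⌊x⌋₊,
          (ArithmeticFunction.moebius n : ℝ) * f (Nat.minFac n) / n)
        atTop (nhds (-δ)) := by
  rw [isLittleO_iff_tendsto_div (fun N => ∑ n ∈ Finset.Icc 2 N, f (maxPrimeFac n)),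
    tendsto_comp_floor_iff (fun N => ∑ n ∈ Finset.Icc 2 N,
      (ArithmeticFunction.moebius n : ℝ) * f (Nat.minFac n) / n)]
  have hE := (axer (abs_dualCoeff_le hf) (sublinear_sum_dualCoeff hf)).tendsto
  have hrel : ∀ᶠ N : ℕ in atTop, (∑ n ∈ Finset.Icc 2 N, f (maxPrimeFac n)) / N =
      (∑ d ∈ Icc 1 N, dualCoeff f d * ((N:ℝ) / d - (N / d : ℕ))) / N -
        ∑ n ∈ Finset.Icc 2 N, (ArithmeticFunction.moebius n : ℝ) * f (Nat.minFac n) / n := by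
    filter_upwards [eventually_gt_atTop 0] with N hN
    have hN0 : (N:ℝ) ≠ 0 := by exact_mod_cast hN.ne'
    rw [sum_dualCoeff_div, sum_maxPrimeFac]
    have : ∑ d ∈ Icc 1 N, dualCoeff f d * ((N:ℝ) / d - (N / d : ℕ)) =
        N * ∑ d ∈ Icc 1 N, dualCoeff f d / d -
          ∑ d ∈ Icc 1 N, dualCoeff f d * ((N / d : ℕ) : ℝ) := by
      rw [mul_sum, ← sum_sub_distrib]
      exact sum_congr rfl fun d _ => by ring
    rw [this]
    field_simp
    ring
  rw [tendsto_congr' hrel]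
  constructor
  · intro h
    have := hE.sub h
    simpa using this
  · intro h
    have := hE.sub h
    simpa using this
end

section
/- Let m ≥ 1 be a fixed integer, f a bounded real-valued arithmetic function, and x ≥ 1. Then ∑_{2 ≤ n ≤ x} (c_n(m) − μ(n))·f(p(n))/n = ∑_{d | m, d > 1} ∑_{1 ≤ n ≤ x/d} μ(n)·f(p(d·n))/n, where c_n(m) is the Ramanujan sum. -/
/-!
Detecting `gcd(q, n) = 1` by `∑_{e ∣ gcd(q, n)} μ(e)` and evaluating the complete exponential sums
`∑_{k ≤ N} e^{2πikm/N}` (equal to `N` if `N ∣ m` and to `0` otherwise) gives the Kluyver formula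
`c_n(m) = ∑_{d ∣ m, d ∣ n} μ(n/d) d` (`ramanujanSum_eq_sum_divisors`).
The term `d = 1` is `μ(n)`, so `c_n(m) - μ(n)` is the part of the sum with `d > 1`. Interchanging
the sums over `n` and `d` and writing `n = d k` yields the claim; as `d > 1`, the condition `n ≥ 2`
amounts to `k ≥ 1`.
-/

open Finset

/-- The Ramanujan sum `c_n(m) = ∑_{1 ≤ q ≤ n, gcd(q,n)=1} e^{2πiqm/n}`. -/
noncomputable def ramanujanSum (n m : ℕ) : ℂ :=
  ∑ q ∈ (Finset.Icc 1 n).filter (fun q => Nat.gcd q n = 1),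
    Complex.exp (2 * Real.pi * Complex.I * q * m / n)

/-- Reindexing of the multiples `n = d * k` of `d` up to `N` by `k`. -/
lemma sum_Icc_filter_dvd (N d : ℕ) (hd : 0 < d) (g : ℕ → ℂ) :
    ∑ n ∈ (Finset.Icc 1 N).filter (fun n => d ∣ n), g n
      = ∑ k ∈ Finset.Icc 1 (N / d), g (d * k) := by
  symm
  refine Finset.sum_bij (fun k _ => d * k) ?_ ?_ ?_ (fun _ _ => rfl)
  · intro k hk
    rw [Finset.mem_Icc, Nat.le_div_iff_mul_le hd] at hk
    simp only [Finset.mem_filter, Finset.mem_Icc]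
    exact ⟨⟨Nat.mul_pos hd hk.1, by linarith [hk.2, mul_comm k d]⟩, dvd_mul_right d k⟩
  · intro a _ b _ h
    exact Nat.eq_of_mul_eq_mul_left hd h
  · intro n hn
    simp only [Finset.mem_filter, Finset.mem_Icc] at hn
    obtain ⟨⟨h1, h2⟩, k, rfl⟩ := hn
    refine ⟨k, ?_, rfl⟩
    rw [Finset.mem_Icc, Nat.le_div_iff_mul_le hd]
    exact ⟨Nat.pos_of_mul_pos_left h1, by linarith [mul_comm k d]⟩

/-- The complete exponential sum to modulus `N`. -/
lemma sum_exp_eq (N m : ℕ) (hN : 0 < N) :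
    ∑ k ∈ Finset.Icc 1 N, Complex.exp (2 * Real.pi * Complex.I * k * m / N)
      = if N ∣ m then (N : ℂ) else 0 := by
  have hprim := Complex.isPrimitiveRoot_exp N hN.ne'
  set ζ := Complex.exp (2 * Real.pi * Complex.I / N) with hζ
  have hterm : ∀ k : ℕ, Complex.exp (2 * Real.pi * Complex.I * k * m / N) = (ζ ^ m) ^ k := by
    intro k
    rw [hζ, ← Complex.exp_nat_mul, ← Complex.exp_nat_mul]
    congr 1
    ring
  simp only [hterm]
  split_ifs with h
  · rw [(hprim.pow_eq_one_iff_dvd m).2 h]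
    simp
  · have hne : ζ ^ m ≠ 1 := fun hone => h ((hprim.pow_eq_one_iff_dvd m).1 hone)
    have hone : (ζ ^ m) ^ N = 1 := by
      rw [← pow_mul, mul_comm, pow_mul, hprim.pow_eq_one, one_pow]
    have hshift : ∑ k ∈ Finset.Icc 1 N, (ζ ^ m) ^ k
        = ζ ^ m * ∑ k ∈ Finset.range N, (ζ ^ m) ^ k := by
      rw [← Finset.Ico_add_one_right_eq_Icc, Finset.sum_Ico_eq_sum_range, Finset.mul_sum]
      simp [pow_add]
    rw [hshift, geom_sum_eq hne, hone]
    simp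

/-- The indicator of coprimality as a Möbius sum over the common divisors. -/
lemma sum_moebius_common_divisors (n q : ℕ) (hn : 0 < n) :
    (∑ e ∈ n.divisors.filter (fun e => e ∣ q), (ArithmeticFunction.moebius e : ℂ))
      = if Nat.gcd q n = 1 then 1 else 0 := by
  have hset : n.divisors.filter (fun e => e ∣ q) = (Nat.gcd q n).divisors := by
    ext e
    simp only [Finset.mem_filter, Nat.mem_divisors, Nat.dvd_gcd_iff]
    have : Nat.gcd q n ≠ 0 := (Nat.gcd_pos_of_pos_right q hn).ne'
    have := hn.ne'
    tauto
  rw [hset]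
  have h : ∑ e ∈ (Nat.gcd q n).divisors, ArithmeticFunction.moebius e
      = if Nat.gcd q n = 1 then 1 else 0 := by
    rw [← ArithmeticFunction.coe_mul_zeta_apply, ArithmeticFunction.moebius_mul_coe_zeta,
      ArithmeticFunction.one_apply]
  exact_mod_cast h

/-- Kluyver's formula for the Ramanujan sum. -/
lemma ramanujanSum_eq_sum_divisors (n m : ℕ) (hn : 0 < n) (hm : 0 < m) :
    ramanujanSum n m = ∑ d ∈ m.divisors.filter (fun d => d ∣ n),
      (ArithmeticFunction.moebius (n / d) : ℂ) * d := by
  set E : ℕ → ℂ := fun q => Complex.exp (2 * Real.pi * Complex.I * q * m / n) with hE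
  calc ramanujanSum n m
      = ∑ q ∈ Finset.Icc 1 n, ∑ e ∈ n.divisors,
          if e ∣ q then (ArithmeticFunction.moebius e : ℂ) * E q else 0 := by
        rw [ramanujanSum, Finset.sum_filter]
        refine Finset.sum_congr rfl fun q _ => ?_
        rw [← Finset.sum_filter, ← Finset.sum_mul, sum_moebius_common_divisors n q hn]
        split_ifs <;> simp [hE]
    _ = ∑ e ∈ n.divisors, (ArithmeticFunction.moebius e : ℂ) *
          if n / e ∣ m then ((n / e : ℕ) : ℂ) else 0 := by
        rw [Finset.sum_comm]
        refine Finset.sum_congr rfl fun e he => ?_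
        have hedvd := Nat.dvd_of_mem_divisors he
        have hepos : 0 < e := Nat.pos_of_mem_divisors he
        have hNpos : 0 < n / e := Nat.div_pos (Nat.le_of_dvd hn hedvd) hepos
        rw [← Finset.sum_filter, ← Finset.mul_sum, sum_Icc_filter_dvd n e hepos,
          ← sum_exp_eq (n / e) m hNpos]
        congr 1
        refine Finset.sum_congr rfl fun k _ => ?_
        simp only [hE]
        congr 1
        have he0 : (e : ℂ) ≠ 0 := by exact_mod_cast hepos.ne'
        have hn0 : (n : ℂ) ≠ 0 := by exact_mod_cast hn.ne'
        rw [Nat.cast_div hedvd he0]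
        push_cast
        field_simp
    _ = ∑ d ∈ n.divisors, (ArithmeticFunction.moebius (n / d) : ℂ) *
          if d ∣ m then (d : ℂ) else 0 := by
        rw [← Nat.sum_div_divisors n]
        refine Finset.sum_congr rfl fun d hd => ?_
        rw [Nat.div_div_self (Nat.dvd_of_mem_divisors hd) hn.ne']
    _ = _ := by
        simp only [mul_ite, mul_zero]
        rw [← Finset.sum_filter]
        refine Finset.sum_congr ?_ fun _ _ => rfl
        ext d
        simp only [Finset.mem_filter, Nat.mem_divisors]
        have := hn.ne'
        have := hm.ne'
        tauto

lemma ramanujanSum_sub_moebius (n m : ℕ) (hn : 0 < n) (hm : 0 < m) :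
    ramanujanSum n m - (ArithmeticFunction.moebius n : ℂ)
      = ∑ d ∈ m.divisors.filter (fun d => 1 < d),
          if d ∣ n then (ArithmeticFunction.moebius (n / d) : ℂ) * d else 0 := by
  have hset : m.divisors.filter (fun d => 1 < d) = m.divisors.erase 1 := by
    ext d
    simp only [Finset.mem_filter, Finset.mem_erase, ne_eq, and_comm]
    refine and_congr_right fun hd => ?_
    have := Nat.pos_of_mem_divisors hd
    omega
  rw [ramanujanSum_eq_sum_divisors n m hn hm, Finset.sum_filter, hset,
    ← Finset.add_sum_erase _ _ (Nat.one_mem_divisors.2 hm.ne')]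
  simp

theorem ramanujanSum_minus_moebius_sum_eq (m : ℕ) (hm : 1 ≤ m)
    (f : ℕ → ℝ) (B : ℝ) (hf : ∀ n, |f n| ≤ B) (x : ℝ) (hx : 1 ≤ x) :
    ∑ n ∈ Finset.Icc 2 ⌊x⌋₊,
        (ramanujanSum n m - (ArithmeticFunction.moebius n : ℂ)) *
          (f (Nat.minFac n) : ℂ) / n
      = ∑ d ∈ m.divisors.filter (fun d => 1 < d),
          ∑ n ∈ Finset.Icc 1 ⌊x / d⌋₊,
            (ArithmeticFunction.moebius n : ℂ) * (f (Nat.minFac (d * n)) : ℂ) / n := by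
  calc _ = ∑ n ∈ Finset.Icc 2 ⌊x⌋₊, ∑ d ∈ m.divisors.filter (fun d => 1 < d),
          if d ∣ n then (ArithmeticFunction.moebius (n / d) : ℂ) * d *
            (f (Nat.minFac n) : ℂ) / n else 0 := by
        refine Finset.sum_congr rfl fun n hn => ?_
        have hn2 := (Finset.mem_Icc.1 hn).1
        rw [ramanujanSum_sub_moebius n m (by omega) hm, Finset.sum_mul, Finset.sum_div]
        refine Finset.sum_congr rfl fun d _ => ?_
        split_ifs <;> simp
    _ = _ := by
        rw [Finset.sum_comm]
        refine Finset.sum_congr rfl fun d hd => ?_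
        have hd1 := (Finset.mem_filter.1 hd).2
        have hset : (Finset.Icc 2 ⌊x⌋₊).filter (fun n => d ∣ n)
            = (Finset.Icc 1 ⌊x⌋₊).filter (fun n => d ∣ n) := by
          ext n
          simp only [Finset.mem_filter, Finset.mem_Icc]
          constructor
          · rintro ⟨⟨h1, h2⟩, h3⟩
            exact ⟨⟨by omega, h2⟩, h3⟩
          · rintro ⟨⟨h1, h2⟩, h3⟩
            have := Nat.le_of_dvd h1 h3
            exact ⟨⟨by omega, h2⟩, h3⟩
        rw [← Finset.sum_filter, hset, sum_Icc_filter_dvd _ d (by omega), Nat.floor_div_natCast]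
        refine Finset.sum_congr rfl fun k hk => ?_
        have hd0 : (d : ℂ) ≠ 0 := by
          have : d ≠ 0 := by omega
          exact_mod_cast this
        have hk0 : (k : ℂ) ≠ 0 := by
          have : k ≠ 0 := by have := (Finset.mem_Icc.1 hk).1; omega
          exact_mod_cast this
        rw [Nat.mul_div_cancel_left k (by omega)]
        push_cast
        field_simp
end
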